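/- Suppose p ≤ p̄_c with Ω p̄_c ≤ 2, and suppose T_p^{(ℓ,2)} ≤ K_{ℓ,2} Ω^{-ℓ/2}. Then for ℓ ≥ 4, Σ_{x ≠ 0} Π^{(0,ℓ)}_p(x) ≤ (ℓ-1) 2^ℓ K_{ℓ,2} Ω^{-ℓ/2}, where Π^{(0,ℓ)}_p(x) is the probability of an occupied cycle of length ≥ ℓ through 0 and x. -/

import Mathlib

open MeasureTheory ProbabilityTheory ENNReal

/-- `e` is an edge of the transitive (Cayley) graph on the additive group `V`
with neighbour set `S`. -/
def IsEdge {V : Type*} [AddCommGroup V] (S : Finset V) (e : Sym2 V) : Prop :=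
  ∃ x y : V, e = s(x, y) ∧ y - x ∈ S

/-- The event that `x` is connected to `y` by an occupied self-avoiding path of
length at least `i`. -/
def ConnGE {V : Type*} [AddCommGroup V] {Ωs : Type*} (S : Finset V)
    (occ : Sym2 V → Set Ωs) (i : ℕ) (x y : V) : Set Ωs :=
  {ω | ∃ k, i ≤ k ∧ ∃ w : Fin (k + 1) → V, Function.Injective w ∧
    w 0 = x ∧ w (Fin.last k) = y ∧
    ∀ m : Fin k, w m.succ - w m.castSucc ∈ S ∧ ω ∈ occ s(w m.castSucc, w m.succ)}

/-- The event that `x` is connected to `y` by an occupied path. -/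
def Conn {V : Type*} [AddCommGroup V] {Ωs : Type*} (S : Finset V)
    (occ : Sym2 V → Set Ωs) : V → V → Set Ωs :=
  ConnGE S occ 0

/-- The event that there is an occupied cycle of length at least `ℓ` containing both
`0` and `x`. -/
def CycleGE {V : Type*} [AddCommGroup V] {Ωs : Type*} (S : Finset V)
    (occ : Sym2 V → Set Ωs) (ℓ : ℕ) (x : V) : Set Ωs :=
  {ω | ∃ k, ℓ ≤ k ∧ ∃ w : ZMod k → V, Function.Injective w ∧ w 0 = 0 ∧
    (∃ m, w m = x) ∧ ∀ m, w (m + 1) - w m ∈ S ∧ ω ∈ occ s(w m, w (m + 1))}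

/-- Convolution over the vertex group. -/
noncomputable def pconv {V : Type*} [AddCommGroup V] (f g : V → ℝ≥0∞) (x : V) : ℝ≥0∞ :=
  ∑' y, f y * g (x - y)

/-- The single-step distribution `D(y) = 1/Ω` for `y` a neighbour of `0`. -/
noncomputable def DStep {V : Type*} [AddCommGroup V] [DecidableEq V] (S : Finset V)
    (y : V) : ℝ≥0∞ :=
  if y ∈ S then (S.card : ℝ≥0∞)⁻¹ else 0

/-- `i`-fold convolution with `D`: `convIter D i f = D^{*i} * f`. -/
noncomputable def convIter {V : Type*} [AddCommGroup V] (D : V → ℝ≥0∞) :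
    ℕ → (V → ℝ≥0∞) → V → ℝ≥0∞
  | 0, f => f
  | i + 1, f => pconv D (convIter D i f)

section DisjointOccurrence

/-- The expectation of `f` over a random subset of `A` which contains each `e ∈ A`
independently with probability `r e`. -/
noncomputable def bernoulliExp {E : Type*} [DecidableEq E] (r : E → ℝ) (A : Finset E)
    (f : Finset E → ℝ) : ℝ :=
  ∑ s ∈ A.powerset, (∏ e ∈ A, if e ∈ s then r e else 1 - r e) * f s

theorem bernoulliExp_insert {E : Type*} [DecidableEq E] (r : E → ℝ) {A : Finset E} {e : E}
    (he : e ∉ A) (f : Finset E → ℝ) :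
    bernoulliExp r (insert e A) f =
      (1 - r e) * bernoulliExp r A f + r e * bernoulliExp r A (fun s => f (insert e s)) := by
  unfold bernoulliExp
  rw [Finset.sum_powerset_insert he, Finset.mul_sum, Finset.mul_sum]
  congr 1
  · refine Finset.sum_congr rfl fun s hs => ?_
    have hes : e ∉ s := fun h => he (Finset.mem_powerset.1 hs h)
    rw [Finset.prod_insert he, if_neg hes, mul_assoc]
  · refine Finset.sum_congr rfl fun s _ => ?_
    rw [Finset.prod_insert he, if_pos (Finset.mem_insert_self e s), mul_assoc]
    congr 2
    refine Finset.prod_congr rfl fun x hx => ?_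
    have hxe : x ≠ e := fun h => he (h ▸ hx)
    simp [hxe]

theorem bernoulliExp_mono {E : Type*} [DecidableEq E] {r : E → ℝ} (h0 : ∀ e, 0 ≤ r e)
    (h1 : ∀ e, r e ≤ 1) (A : Finset E) {f g : Finset E → ℝ} (hfg : ∀ s ⊆ A, f s ≤ g s) :
    bernoulliExp r A f ≤ bernoulliExp r A g := by
  refine Finset.sum_le_sum fun s hs => ?_
  refine mul_le_mul_of_nonneg_left (hfg s (Finset.mem_powerset.1 hs)) ?_
  refine Finset.prod_nonneg fun e _ => ?_
  split_ifs
  · exact h0 e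
  · linarith [h1 e]

theorem bernoulliExp_add {E : Type*} [DecidableEq E] (r : E → ℝ) (A : Finset E)
    (f g : Finset E → ℝ) :
    bernoulliExp r A (fun s => f s + g s) = bernoulliExp r A f + bernoulliExp r A g := by
  simp only [bernoulliExp, mul_add, Finset.sum_add_distrib]

theorem bernoulliExp_const_mul {E : Type*} [DecidableEq E] (r : E → ℝ) (A : Finset E)
    (c : ℝ) (f : Finset E → ℝ) :
    bernoulliExp r A (fun s => c * f s) = c * bernoulliExp r A f := by
  simp only [bernoulliExp, Finset.mul_sum]
  exact Finset.sum_congr rfl fun s _ => by ring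

open Classical in
/-- The van den Berg–Kesten inequality on a finite set, for an increasing relation `D`: splitting
one random set is less likely to produce a pair in `D` than sampling two independent sets. -/
theorem bernoulliExp_split_le {E : Type*} [DecidableEq E] {r : E → ℝ} (h0 : ∀ e, 0 ≤ r e)
    (h1 : ∀ e, r e ≤ 1) (A : Finset E) (D : Finset E → Finset E → Prop)
    (hD : ∀ ⦃s s' t t'⦄, s ⊆ s' → t ⊆ t' → D s t → D s' t') :
    bernoulliExp r A (fun u => if ∃ s ⊆ u, D s (u \ s) then 1 else 0) ≤
      bernoulliExp r A (fun s => bernoulliExp r A fun t => if D s t then 1 else 0) := by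
  induction A using Finset.induction_on generalizing D with
  | empty =>
    simp only [bernoulliExp, Finset.powerset_empty, Finset.sum_singleton, Finset.prod_empty,
      one_mul, Finset.subset_empty, exists_eq_left, Finset.sdiff_empty, le_refl]
  | insert e A he ih =>
    obtain ⟨D', hD'⟩ : ∃ D' : Finset E → Finset E → Prop,
        ∀ s t, D' s t ↔ D (insert e s) t ∨ D s (insert e t) := ⟨_, fun _ _ => Iff.rfl⟩
    have hD'mono : ∀ ⦃s s' t t'⦄, s ⊆ s' → t ⊆ t' → D' s t → D' s' t' := by
      intro s s' t t' hs ht h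
      rw [hD'] at h ⊢
      exact h.imp (hD (Finset.insert_subset_insert e hs) ht)
        (hD hs (Finset.insert_subset_insert e ht))
    have hsplit : bernoulliExp r A
          (fun u => if ∃ s ⊆ insert e u, D s (insert e u \ s) then (1 : ℝ) else 0) ≤
        bernoulliExp r A (fun u => if ∃ s ⊆ u, D' s (u \ s) then 1 else 0) := by
      refine bernoulliExp_mono h0 h1 A fun u _ => ?_
      by_cases h : ∃ s ⊆ insert e u, D s (insert e u \ s)
      · have h' : ∃ s ⊆ u, D' s (u \ s) := by
          obtain ⟨s, hs, hDs⟩ := h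
          refine ⟨s.erase e, Finset.subset_insert_iff.1 hs, ?_⟩
          by_cases hes : e ∈ s
          · refine (hD' _ _).2 (Or.inl (hD ?_ ?_ hDs))
            · rw [Finset.insert_erase hes]
            · intro x; simp only [Finset.mem_sdiff, Finset.mem_insert, Finset.mem_erase]; grind
          · refine (hD' _ _).2 (Or.inr (hD ?_ ?_ hDs))
            · rw [Finset.erase_eq_of_notMem hes]
            · intro x; simp only [Finset.mem_sdiff, Finset.mem_insert, Finset.mem_erase]; grind
        rw [if_pos h, if_pos h']
      · rw [if_neg h]; split_ifs <;> norm_num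
    have h0e := h0 e
    have h1e : 0 ≤ 1 - r e := by linarith [h1 e]
    have hih := ih D hD
    have hih' := hsplit.trans (ih D' hD'mono)
    rw [bernoulliExp_insert r he]
    refine (add_le_add (mul_le_mul_of_nonneg_left hih h1e)
      (mul_le_mul_of_nonneg_left hih' h0e)).trans ?_
    suffices h : bernoulliExp r A (fun s => bernoulliExp r A fun t =>
          (1 - r e) * (if D s t then 1 else 0) + r e * (if D' s t then 1 else 0)) ≤
        bernoulliExp r A (fun s => bernoulliExp r A fun t =>
          (1 - r e) * ((1 - r e) * (if D s t then 1 else 0) +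
            r e * (if D s (insert e t) then 1 else 0)) +
          r e * ((1 - r e) * (if D (insert e s) t then 1 else 0) +
            r e * (if D (insert e s) (insert e t) then 1 else 0))) by
      simpa only [bernoulliExp_insert r he, bernoulliExp_add, bernoulliExp_const_mul] using h
    refine bernoulliExp_mono h0 h1 A fun s _ => bernoulliExp_mono h0 h1 A fun t _ => ?_
    have ha : D s t → D (insert e s) t := hD (Finset.subset_insert e s) subset_rfl
    have hb : D s t → D s (insert e t) := hD subset_rfl (Finset.subset_insert e t)
    have hab : D (insert e s) t → D (insert e s) (insert e t) :=
      hD subset_rfl (Finset.subset_insert e t)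
    have hba : D s (insert e t) → D (insert e s) (insert e t) :=
      hD (Finset.subset_insert e s) subset_rfl
    by_cases c : D s t
    · simp only [hD', c, ha c, hb c, hab (ha c), or_self, if_true]
      exact le_of_eq (by ring)
    by_cases ca : D (insert e s) t
    · by_cases cb : D s (insert e t)
      · simp only [hD', c, ca, cb, hab ca, or_self, if_true, if_false]
        nlinarith
      · simp only [hD', c, ca, cb, hab ca, true_or, if_true, if_false]
        exact le_of_eq (by ring)
    by_cases cb : D s (insert e t)
    · simp only [hD', c, ca, cb, hba cb, or_true, if_true, if_false]
      exact le_of_eq (by ring)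
    · simp only [hD', c, ca, cb, or_self, if_false]
      split_ifs <;> nlinarith

/-- The event that all `e ∈ a` are occupied. -/
def allOcc {E Ωs : Type*} (o : E → Set Ωs) (a : Finset E) : Set Ωs := ⋂ e ∈ a, o e

theorem measurableSet_allOcc {E Ωs : Type*} [MeasurableSpace Ωs] {o : E → Set Ωs}
    (hm : ∀ e, MeasurableSet (o e)) (a : Finset E) : MeasurableSet (allOcc o a) :=
  Finset.measurableSet_biInter a fun e _ => hm e

open Classical in
theorem measureReal_config_eq_bernoulliExp {E Ωs : Type*} [DecidableEq E] [MeasurableSpace Ωs]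
    {P : Measure Ωs} [IsProbabilityMeasure P] {o : E → Set Ωs} (hm : ∀ e, MeasurableSet (o e))
    (hind : iIndepSet o P) (A : Finset E) (Q : Finset E → Prop) :
    P.real {ω | Q {e ∈ A | ω ∈ o e}} =
      bernoulliExp (fun e => P.real (o e)) A (fun s => if Q s then 1 else 0) := by
  set atom : Finset E → Set Ωs := fun s => ⋂ e ∈ A, if e ∈ s then o e else (o e)ᶜ with hatom
  have hatom_mem : ∀ s ⊆ A, ∀ ω, ω ∈ atom s ↔ {e ∈ A | ω ∈ o e} = s := by
    intro s hs ω
    simp only [hatom, Set.mem_iInter, Finset.ext_iff, Finset.mem_filter]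
    constructor
    · intro h e
      by_cases heA : e ∈ A
      · have := h e heA
        by_cases hes : e ∈ s <;> simp_all
      · exact iff_of_false (fun h => heA h.1) fun h => heA (hs h)
    · intro h e heA
      have := h e
      by_cases hes : e ∈ s <;> simp_all
  have hatom_meas : ∀ s, MeasurableSet (atom s) := fun s =>
    Finset.measurableSet_biInter A fun e _ => by
      split_ifs
      · exact hm e
      · exact (hm e).compl
  have hatom_prob : ∀ s, P.real (atom s) =
      ∏ e ∈ A, if e ∈ s then P.real (o e) else 1 - P.real (o e) := by
    intro s
    rw [measureReal_def, (iIndepSet_iff o P).1 hind A, ENNReal.toReal_prod]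
    · refine Finset.prod_congr rfl fun e _ => ?_
      split_ifs
      · rfl
      · exact probReal_compl_eq_one_sub (hm e)
    · intro e _
      have hg : MeasurableSet[MeasurableSpace.generateFrom {o e}] (o e) :=
        MeasurableSpace.measurableSet_generateFrom rfl
      split_ifs
      · exact hg
      · exact hg.compl
  have hset : {ω | Q {e ∈ A | ω ∈ o e}} = ⋃ s ∈ A.powerset.filter Q, atom s := by
    ext ω
    simp only [Set.mem_ofPred_eq, Set.mem_iUnion, Finset.mem_filter, Finset.mem_powerset,
      exists_prop]
    constructor
    · intro h
      exact ⟨_, ⟨Finset.filter_subset _ _, h⟩, (hatom_mem _ (Finset.filter_subset _ _) ω).2 rfl⟩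
    · rintro ⟨s, ⟨hs, hQ⟩, hω⟩
      rwa [(hatom_mem s hs ω).1 hω]
  rw [hset, measureReal_biUnion_finset _ fun s _ => hatom_meas s]
  · rw [bernoulliExp, Finset.sum_filter]
    refine Finset.sum_congr rfl fun s _ => ?_
    rw [hatom_prob]
    split_ifs <;> simp
  · intro s hs t ht hst
    simp only [Finset.coe_filter, Finset.mem_powerset, Set.mem_ofPred_eq] at hs ht
    refine Set.disjoint_left.2 fun ω h h' => hst ?_
    rw [← (hatom_mem s hs.1 ω).1 h, (hatom_mem t ht.1 ω).1 h']

theorem measure_iUnion_eq_iSup_finset {Ωs ι : Type*} [Countable ι] [MeasurableSpace Ωs]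
    (P : Measure Ωs) (s : ι → Set Ωs) :
    P (⋃ i, s i) = ⨆ F : Finset ι, P (⋃ i ∈ F, s i) := by
  rw [Set.iUnion_eq_iUnion_finset]
  refine Directed.measure_iUnion (Monotone.directed_le fun F G h => ?_)
  exact Set.biUnion_subset_biUnion_left h

theorem measureReal_biUnion_allOcc {E Ωs ι : Type*} [DecidableEq E] [MeasurableSpace Ωs]
    {P : Measure Ωs} [IsProbabilityMeasure P] {o : E → Set Ωs} (hm : ∀ e, MeasurableSet (o e))
    (hind : iIndepSet o P) (a : ι → Finset E) (F : Finset ι) {A : Finset E}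
    (hA : ∀ i ∈ F, a i ⊆ A) [DecidablePred fun s => ∃ i ∈ F, a i ⊆ s] :
    P.real (⋃ i ∈ F, allOcc o (a i)) =
      bernoulliExp (fun e => P.real (o e)) A (fun s => if ∃ i ∈ F, a i ⊆ s then 1 else 0) := by
  classical
  convert measureReal_config_eq_bernoulliExp hm hind A (fun s => ∃ i ∈ F, a i ⊆ s) using 2
  · ext ω
    simp only [allOcc, Set.mem_iUnion, Set.mem_iInter, exists_prop, Set.mem_ofPred_eq]
    refine exists_congr fun i => and_congr_right fun hi => ?_
    exact ⟨fun h e he => Finset.mem_filter.2 ⟨hA i hi he, h e he⟩,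
      fun h e he => (Finset.mem_filter.1 (h he)).2⟩
  · ext s
    congr

/-- The van den Berg–Kesten inequality for events that require one of countably many finite sets
to be fully occupied. -/
theorem measure_disjoint_occurrence_le {E Ωs ι κ : Type*} [Countable ι] [Countable κ]
    [MeasurableSpace Ωs] {P : Measure Ωs} [IsProbabilityMeasure P] {o : E → Set Ωs}
    (hm : ∀ e, MeasurableSet (o e)) (hind : iIndepSet o P) (a : ι → Finset E)
    (b : κ → Finset E) :
    P (⋃ q : {q : ι × κ // Disjoint (a q.1) (b q.2)},
        allOcc o (a q.1.1) ∩ allOcc o (b q.1.2)) ≤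
      P (⋃ i, allOcc o (a i)) * P (⋃ j, allOcc o (b j)) := by
  classical
  rw [measure_iUnion_eq_iSup_finset]
  refine iSup_le fun F => ?_
  set I : Finset ι := F.image fun q => q.1.1
  set J : Finset κ := F.image fun q => q.1.2
  set A : Finset E := I.biUnion a ∪ J.biUnion b
  have hIA : ∀ i ∈ I, a i ⊆ A := fun i hi =>
    (Finset.subset_biUnion_of_mem a hi).trans Finset.subset_union_left
  have hJA : ∀ j ∈ J, b j ⊆ A := fun j hj =>
    (Finset.subset_biUnion_of_mem b hj).trans Finset.subset_union_right
  have hFI : ∀ q ∈ F, q.1.1 ∈ I := fun q hq => Finset.mem_image_of_mem _ hq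
  have hFJ : ∀ q ∈ F, q.1.2 ∈ J := fun q hq => Finset.mem_image_of_mem _ hq
  set D : Finset E → Finset E → Prop :=
    fun s t => (∃ i ∈ I, a i ⊆ s) ∧ (∃ j ∈ J, b j ⊆ t) with hD
  have hDmono : ∀ ⦃s s' t t'⦄, s ⊆ s' → t ⊆ t' → D s t → D s' t' := by
    rintro s s' t t' hs ht ⟨⟨i, hi, his⟩, ⟨j, hj, hjt⟩⟩
    exact ⟨⟨i, hi, his.trans hs⟩, ⟨j, hj, hjt.trans ht⟩⟩
  have h0 : ∀ e, 0 ≤ P.real (o e) := fun e => measureReal_nonneg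
  have h1 : ∀ e, P.real (o e) ≤ 1 := fun e => measureReal_le_one
  have hreal : P.real (⋃ q ∈ F, allOcc o (a q.1.1) ∩ allOcc o (b q.1.2)) ≤
      P.real (⋃ i ∈ I, allOcc o (a i)) * P.real (⋃ j ∈ J, allOcc o (b j)) := by
    have hunion : (⋃ q ∈ F, allOcc o (a q.1.1) ∩ allOcc o (b q.1.2)) =
        ⋃ q ∈ F, allOcc o (a q.1.1 ∪ b q.1.2) := by
      simp only [allOcc, Finset.mem_union, Set.iInter_or, Set.iInter_inter_distrib]
    rw [hunion, measureReal_biUnion_allOcc hm hind (fun q => a q.1.1 ∪ b q.1.2) F (A := A)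
        (fun q hq => Finset.union_subset (hIA _ (hFI q hq)) (hJA _ (hFJ q hq))),
      measureReal_biUnion_allOcc hm hind a I hIA, measureReal_biUnion_allOcc hm hind b J hJA]
    refine (bernoulliExp_mono h0 h1 A fun u _ => ?_).trans
      ((bernoulliExp_split_le h0 h1 A D hDmono).trans_eq ?_)
    · by_cases h : ∃ q ∈ F, a q.1.1 ∪ b q.1.2 ⊆ u
      · have h' : ∃ s ⊆ u, D s (u \ s) := by
          obtain ⟨q, hq, hqu⟩ := h
          refine ⟨a q.1.1, Finset.union_subset_left hqu, ⟨_, hFI q hq, subset_rfl⟩,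
            ⟨_, hFJ q hq, ?_⟩⟩
          exact Finset.subset_sdiff.2 ⟨Finset.union_subset_right hqu, q.2.symm⟩
        rw [if_pos h, if_pos h']
      · rw [if_neg h]; split_ifs <;> norm_num
    · rw [mul_comm, ← bernoulliExp_const_mul]
      congr 1
      ext s
      rw [mul_comm, ← bernoulliExp_const_mul]
      congr 1
      ext t
      simp only [hD, ite_and]
      split_ifs <;> simp
  have hle : P (⋃ q ∈ F, allOcc o (a q.1.1) ∩ allOcc o (b q.1.2)) ≤
      P (⋃ i ∈ I, allOcc o (a i)) * P (⋃ j ∈ J, allOcc o (b j)) := by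
    rw [← ENNReal.toReal_le_toReal (measure_ne_top P _)
      (ENNReal.mul_ne_top (measure_ne_top P _) (measure_ne_top P _)), ENNReal.toReal_mul]
    exact hreal
  exact hle.trans (mul_le_mul' (measure_mono (Set.iUnion₂_subset_iUnion _ _))
    (measure_mono (Set.iUnion₂_subset_iUnion _ _)))

/-- Relabelling the underlying sites injectively, preserving their probabilities, does not change
the probability that one of countably many finite sets is fully occupied. -/
theorem measure_iUnion_allOcc_map {E Ωs ι : Type*} [Countable ι] [MeasurableSpace Ωs]
    {P : Measure Ωs} [IsProbabilityMeasure P] {o : E → Set Ωs} (hm : ∀ e, MeasurableSet (o e))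
    (hind : iIndepSet o P) (φ : E ↪ E) (hφ : ∀ e, P (o (φ e)) = P (o e)) (a : ι → Finset E) :
    P (⋃ i, allOcc o ((a i).map φ)) = P (⋃ i, allOcc o (a i)) := by
  classical
  rw [measure_iUnion_eq_iSup_finset, measure_iUnion_eq_iSup_finset]
  refine iSup_congr fun F => ?_
  rw [← measureReal_eq_measureReal_iff (measure_ne_top P _) (measure_ne_top P _),
    measureReal_biUnion_eq_sum_powerset fun i _ => measurableSet_allOcc hm _,
    measureReal_biUnion_eq_sum_powerset fun i _ => measurableSet_allOcc hm _]
  refine Finset.sum_congr rfl fun u _ => ?_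
  have h1 : (⋂ i ∈ u, allOcc o (a i)) = ⋂ e ∈ u.biUnion a, o e := by
    simp only [allOcc, Finset.set_biInter_biUnion]
  have h2 : (⋂ i ∈ u, allOcc o ((a i).map φ)) = ⋂ e ∈ (u.biUnion a).map φ, o e := by
    ext ω
    simp only [allOcc, Set.mem_iInter, Finset.mem_map, Finset.mem_biUnion]
    grind
  rw [h1, h2, measureReal_def, measureReal_def, hind.meas_biInter, hind.meas_biInter,
    Finset.prod_map]
  simp only [hφ]

end DisjointOccurrence

section Walks

variable {V : Type*} [AddCommGroup V] {S : Finset V}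

/-- The edge traversed by the step `s` from `x`. -/
def stepEdge (x : V) (s : S) : {e : Sym2 V // IsEdge S e} :=
  ⟨s(x, x + s), x, x + s, rfl, by simp⟩

/-- The vertices visited by the walk from `x` with the given steps. -/
def walkVerts (x : V) : List S → List V
  | [] => [x]
  | s :: σ => x :: walkVerts (x + s) σ

/-- The final vertex of the walk from `x` with the given steps. -/
def walkEnd (x : V) : List S → V
  | [] => x
  | s :: σ => walkEnd (x + s) σ

/-- The edges traversed by the walk from `x` with the given steps. -/
def walkEdges [DecidableEq V] (x : V) : List S → Finset {e : Sym2 V // IsEdge S e}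
  | [] => ∅
  | s :: σ => insert (stepEdge x s) (walkEdges (x + s) σ)

/-- The step sequences of self-avoiding walks from `x` to `y` of length at least `i`. -/
def sawSteps (S : Finset V) (i : ℕ) (x y : V) : Set (List S) :=
  {σ | i ≤ σ.length ∧ (walkVerts x σ).Nodup ∧ walkEnd x σ = y}

/-- The event that a self-avoiding walk from `x` to `y` of length at least `i` is occupied. -/
def sawEvent [DecidableEq V] {Ωs : Type*} (S : Finset V) (occ : Sym2 V → Set Ωs) (i : ℕ)
    (x y : V) : Set Ωs :=
  ⋃ σ : sawSteps S i x y,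
    allOcc (fun e : {e : Sym2 V // IsEdge S e} => occ e) (walkEdges x σ.1)

theorem mem_walkVerts_of_mem_walkEdges [DecidableEq V] (x : V) (σ : List S)
    {e : {e : Sym2 V // IsEdge S e}} (he : e ∈ walkEdges x σ) {z : V} (hz : z ∈ e.1) :
    z ∈ walkVerts x σ := by
  induction σ generalizing x with
  | nil => simp [walkEdges] at he
  | cons s σ ih =>
    simp only [walkEdges, Finset.mem_insert] at he
    rcases he with rfl | he
    · simp only [stepEdge, Sym2.mem_iff] at hz
      rcases hz with rfl | rfl
      · simp [walkVerts]
      · cases σ <;> simp [walkVerts]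
    · exact List.mem_cons_of_mem _ (ih _ he)

theorem walkVerts_add (x v : V) (σ : List S) :
    walkVerts (x + v) σ = (walkVerts x σ).map (· + v) := by
  induction σ generalizing x with
  | nil => rfl
  | cons s σ ih => simp [walkVerts, ← ih, add_right_comm]

theorem walkEnd_add (x v : V) (σ : List S) : walkEnd (x + v) σ = walkEnd x σ + v := by
  induction σ generalizing x with
  | nil => rfl
  | cons s σ ih => simp [walkEnd, ← ih, add_right_comm]

theorem sawSteps_add (i : ℕ) (x y v : V) :
    sawSteps S i (x + v) (y + v) = sawSteps S i x y := by
  ext σ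
  simp only [sawSteps, Set.mem_ofPred_eq, walkVerts_add, walkEnd_add, _root_.add_left_inj,
    List.nodup_map_iff (add_left_injective v)]

/-- Translation of edges by `v`. -/
def edgeTranslate (S : Finset V) (v : V) :
    {e : Sym2 V // IsEdge S e} ↪ {e : Sym2 V // IsEdge S e} where
  toFun e := ⟨Sym2.map (· + v) e.1, by
    obtain ⟨x, y, h, hS⟩ := e.2
    exact ⟨x + v, y + v, by rw [h, Sym2.map_mk], by simpa using hS⟩⟩
  inj' e e' h := Subtype.ext
    (Sym2.map.injective (add_left_injective v) (congrArg Subtype.val h))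

theorem walkEdges_add [DecidableEq V] (x v : V) (σ : List S) :
    walkEdges (x + v) σ = (walkEdges x σ).map (edgeTranslate S v) := by
  induction σ generalizing x with
  | nil => rfl
  | cons s σ ih =>
    have h : stepEdge (x + v) s = edgeTranslate S v (stepEdge x s) := by
      refine Subtype.ext ?_
      change s(x + v, x + v + s) = Sym2.map (· + v) s(x, x + s)
      rw [Sym2.map_mk, add_right_comm]
    rw [walkEdges, walkEdges, Finset.map_insert, ← ih, h, add_right_comm]

theorem exists_path_of_steps [DecidableEq V] (x : V) (σ : List S) :
    ∃ w : Fin (σ.length + 1) → V, List.ofFn w = walkVerts x σ ∧ w 0 = x ∧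
      w (Fin.last _) = walkEnd x σ ∧ ∀ m : Fin σ.length, w m.succ - w m.castSucc ∈ S ∧
        ∃ e ∈ walkEdges x σ, e.1 = s(w m.castSucc, w m.succ) := by
  induction σ generalizing x with
  | nil => exact ⟨fun _ => x, by simp [walkVerts], rfl, rfl, fun m => m.elim0⟩
  | cons s σ ih =>
    obtain ⟨w, hw, hw0, hwl, hwm⟩ := ih (x + s)
    refine ⟨Fin.cons x w, ?_, rfl, ?_, ?_⟩
    · simp [List.ofFn_succ, walkVerts, ← hw]
    · exact hwl
    · intro m
      refine Fin.cases ?_ (fun m => ?_) m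
      · refine ⟨?_, stepEdge x s, Finset.mem_insert_self _ _, ?_⟩
        · simp [hw0]
        · simp [stepEdge, hw0]
      · obtain ⟨h, e, he, hee⟩ := hwm m
        exact ⟨h, e, Finset.mem_insert_of_mem he, hee⟩

theorem sawEvent_subset_connGE [DecidableEq V] {Ωs : Type*} (occ : Sym2 V → Set Ωs) (i : ℕ)
    (x y : V) : sawEvent S occ i x y ⊆ ConnGE S occ i x y := by
  intro ω hω
  obtain ⟨⟨σ, hi, hnd, hend⟩, hω⟩ := Set.mem_iUnion.1 hω
  obtain ⟨w, hw, hw0, hwl, hwm⟩ := exists_path_of_steps x σ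
  refine ⟨σ.length, hi, w, List.nodup_ofFn.1 (hw ▸ hnd), hw0, hwl.trans hend, fun m => ?_⟩
  obtain ⟨h, e, he, hee⟩ := hwm m
  exact ⟨h, hee ▸ Set.mem_iInter₂.1 hω e he⟩

theorem sawEvent_succ_subset [DecidableEq V] {Ωs : Type*} (occ : Sym2 V → Set Ωs) (i : ℕ)
    (x y : V) :
    sawEvent S occ (i + 1) x y ⊆ ⋃ s : S,
      ⋃ q : {q : Unit × sawSteps S i (x + s) y //
          Disjoint {stepEdge x s} (walkEdges (x + s) q.2.1)},
        allOcc (fun e : {e : Sym2 V // IsEdge S e} => occ e) {stepEdge x s} ∩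
        allOcc (fun e : {e : Sym2 V // IsEdge S e} => occ e) (walkEdges (x + s) q.1.2.1) := by
  intro ω hω
  obtain ⟨⟨σ, hi, hnd, hend⟩, hω⟩ := Set.mem_iUnion.1 hω
  cases σ with
  | nil => simp at hi
  | cons s σ =>
    simp only [walkVerts, List.nodup_cons] at hnd
    have hdisj : Disjoint {stepEdge x s} (walkEdges (x + s) σ) := by
      rw [Finset.disjoint_singleton_left]
      exact fun h => hnd.1 (mem_walkVerts_of_mem_walkEdges _ _ h (Sym2.mem_mk_left _ _))
    simp only [allOcc, Set.mem_iInter, walkEdges] at hω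
    refine Set.mem_iUnion.2 ⟨s, Set.mem_iUnion.2
      ⟨⟨⟨(), ⟨σ, by simpa using hi, hnd.2, hend⟩⟩, hdisj⟩, ?_, ?_⟩⟩
    · exact Set.mem_iInter₂.2 fun e he => hω e (by simp [Finset.mem_singleton.1 he])
    · exact Set.mem_iInter₂.2 fun e he => hω e (Finset.mem_insert_of_mem he)

/-- The `n` successive steps of the trajectory `v` starting at time `a`. -/
def trajSteps (v : ℕ → V) (hv : ∀ i, v (i + 1) - v i ∈ S) (a : ℕ) : ℕ → List S
  | 0 => []
  | n + 1 => ⟨v (a + 1) - v a, hv a⟩ :: trajSteps v hv (a + 1) n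

theorem length_trajSteps (v : ℕ → V) (hv : ∀ i, v (i + 1) - v i ∈ S) (a n : ℕ) :
    (trajSteps v hv a n).length = n := by
  induction n generalizing a with
  | zero => rfl
  | succ n ih => simp [trajSteps, ih]

theorem walkVerts_trajSteps (v : ℕ → V) (hv : ∀ i, v (i + 1) - v i ∈ S) (a n : ℕ) :
    walkVerts (v a) (trajSteps v hv a n) = (List.range' a (n + 1)).map v := by
  induction n generalizing a with
  | zero => rfl
  | succ n ih => rw [List.range'_succ, List.map_cons, ← ih]; simp [trajSteps, walkVerts]

theorem walkEnd_trajSteps (v : ℕ → V) (hv : ∀ i, v (i + 1) - v i ∈ S) (a n : ℕ) :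
    walkEnd (v a) (trajSteps v hv a n) = v (a + n) := by
  induction n generalizing a with
  | zero => rfl
  | succ n ih =>
    have := ih (a + 1)
    simpa [trajSteps, walkEnd, add_assoc, add_comm 1 n] using this

theorem exists_of_mem_walkEdges_trajSteps [DecidableEq V] (v : ℕ → V)
    (hv : ∀ i, v (i + 1) - v i ∈ S) (a n : ℕ) {e : {e : Sym2 V // IsEdge S e}}
    (he : e ∈ walkEdges (v a) (trajSteps v hv a n)) :
    ∃ i, a ≤ i ∧ i < a + n ∧ e.1 = s(v i, v (i + 1)) := by
  induction n generalizing a with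
  | zero => simp [trajSteps, walkEdges] at he
  | succ n ih =>
    simp only [trajSteps, walkEdges, Finset.mem_insert, add_sub_cancel] at he
    rcases he with rfl | he
    · exact ⟨a, le_rfl, by lia, by simp [stepEdge]⟩
    · obtain ⟨i, h1, h2, h3⟩ := ih _ he
      exact ⟨i, by lia, by lia, h3⟩

theorem trajSteps_mem_sawSteps (v : ℕ → V) (hv : ∀ i, v (i + 1) - v i ∈ S) {a n j : ℕ}
    (hj : j ≤ n) (hinj : Set.InjOn v (Set.Icc a (a + n))) :
    trajSteps v hv a n ∈ sawSteps S j (v a) (v (a + n)) := by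
  refine ⟨by rwa [length_trajSteps], ?_, walkEnd_trajSteps v hv a n⟩
  rw [walkVerts_trajSteps]
  refine List.Nodup.map_on (fun i hi i' hi' h => hinj ?_ ?_ h) List.nodup_range'
  · rw [List.mem_range'_1] at hi; exact ⟨hi.1, by lia⟩
  · rw [List.mem_range'_1] at hi'; exact ⟨hi'.1, by lia⟩

/-- A cycle of length at least `ℓ` through `0` and `x ≠ 0` splits into two edge-disjoint
self-avoiding walks whose lengths are at least `j + 1` and `ℓ - (j + 1)`, for some `j < ℓ - 1`. -/
theorem cycleGE_subset [DecidableEq V] {Ωs : Type*} (occ : Sym2 V → Set Ωs) {ℓ : ℕ}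
    (hℓ : 4 ≤ ℓ) {x : V} (hx : x ≠ 0) :
    CycleGE S occ ℓ x ⊆ ⋃ j ∈ Finset.range (ℓ - 1),
      ⋃ q : {q : sawSteps S (j + 1) 0 x × sawSteps S (ℓ - (j + 1)) x 0 //
          Disjoint (walkEdges 0 q.1.1) (walkEdges x q.2.1)},
        allOcc (fun e : {e : Sym2 V // IsEdge S e} => occ e) (walkEdges 0 q.1.1.1) ∩
        allOcc (fun e : {e : Sym2 V // IsEdge S e} => occ e) (walkEdges x q.1.2.1) := by
  rintro ω ⟨k, hk, w, hinj, hw0, ⟨m, hm⟩, hstep⟩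
  have : NeZero k := ⟨by lia⟩
  set v : ℕ → V := fun i => w i with hvdef
  have hv : ∀ i, v (i + 1) - v i ∈ S := fun i => by
    simpa [hvdef] using (hstep i).1
  have hocc : ∀ i, ω ∈ occ s(v i, v (i + 1)) := fun i => by
    simpa [hvdef] using (hstep i).2
  have hv0 : v 0 = 0 := by simp [hvdef, hw0]
  have hvk : v k = 0 := by simp [hvdef, hw0]
  have hvinj : ∀ {i j}, v i = v j → i < j + k → j < i + k → i = j := by
    intro i j h hij hji
    have hmod : i ≡ j [MOD k] := (ZMod.natCast_eq_natCast_iff _ _ _).1 (hinj h)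
    rcases le_total i j with hle | hle
    · have := Nat.eq_zero_of_dvd_of_lt ((Nat.modEq_iff_dvd' hle).1 hmod) (by lia)
      lia
    · have := Nat.eq_zero_of_dvd_of_lt ((Nat.modEq_iff_dvd' hle).1 hmod.symm) (by lia)
      lia
  set n := m.val with hn
  have hnk : n < k := ZMod.val_lt m
  have hvn : v n = x := by simp [hvdef, hn, hm]
  have hn0 : n ≠ 0 := fun h => hx (by rw [← hvn, h, hv0])
  have hmem : ∀ a b, ω ∈ allOcc (fun e : {e : Sym2 V // IsEdge S e} => occ e)
      (walkEdges (v a) (trajSteps v hv a b)) := fun a b => Set.mem_iInter₂.2 fun e he => by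
    obtain ⟨i, -, -, hi⟩ := exists_of_mem_walkEdges_trajSteps v hv a b he
    change ω ∈ occ e.1
    rw [hi]
    exact hocc i
  have hdisj : Disjoint (walkEdges (v 0) (trajSteps v hv 0 n))
      (walkEdges (v n) (trajSteps v hv n (k - n))) := by
    refine Finset.disjoint_left.2 fun e he he' => ?_
    obtain ⟨i, -, hi, hei⟩ := exists_of_mem_walkEdges_trajSteps v hv _ _ he
    obtain ⟨j, hj, hj', hej⟩ := exists_of_mem_walkEdges_trajSteps v hv _ _ he'
    rw [hei, Sym2.eq_iff] at hej
    rcases hej with ⟨h, -⟩ | ⟨h, h'⟩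
    · have := hvinj h (by lia) (by lia)
      lia
    · have h2 := hvinj h' (by lia) (by lia)
      have h3 := hvinj h (by lia) (by lia)
      lia
  have key : ∀ j, j + 1 ≤ n → ℓ - (j + 1) ≤ k - n → j < ℓ - 1 → ω ∈ ⋃ j ∈ Finset.range (ℓ - 1),
      ⋃ q : {q : sawSteps S (j + 1) 0 x × sawSteps S (ℓ - (j + 1)) x 0 //
          Disjoint (walkEdges 0 q.1.1) (walkEdges x q.2.1)},
        allOcc (fun e : {e : Sym2 V // IsEdge S e} => occ e) (walkEdges 0 q.1.1.1) ∩
        allOcc (fun e : {e : Sym2 V // IsEdge S e} => occ e) (walkEdges x q.1.2.1) := by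
    intro j h1 h2 h3
    have hs1 : trajSteps v hv 0 n ∈ sawSteps S (j + 1) 0 x := by
      have := trajSteps_mem_sawSteps v hv (a := 0) h1 fun i hi i' hi' h =>
        hvinj h (by have := hi.2; lia) (by have := hi'.2; lia)
      rwa [hv0, zero_add, hvn] at this
    have hs2 : trajSteps v hv n (k - n) ∈ sawSteps S (ℓ - (j + 1)) x 0 := by
      have := trajSteps_mem_sawSteps v hv (a := n) h2 fun i hi i' hi' h =>
        hvinj h (by have := hi.2; have := hi'.1; lia) (by have := hi.1; have := hi'.2; lia)
      rwa [hvn, Nat.add_sub_cancel' hnk.le, hvk] at this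
    have ha := hmem 0 n
    have hb := hmem n (k - n)
    rw [hv0] at ha hdisj
    rw [hvn] at hb hdisj
    exact Set.mem_iUnion₂.2 ⟨j, Finset.mem_range.2 h3,
      Set.mem_iUnion.2 ⟨⟨⟨⟨_, hs1⟩, ⟨_, hs2⟩⟩, hdisj⟩, ha, hb⟩⟩
  rcases le_or_gt n (ℓ - 1) with h | h
  · exact key (n - 1) (by lia) (by lia) (by lia)
  · exact key (ℓ - 2) (by lia) (by lia) (by lia)

end Walks

section Convolution

variable {V : Type*} [AddCommGroup V]

theorem pconv_comm (f g : V → ℝ≥0∞) : pconv f g = pconv g f := by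
  ext x
  rw [pconv, pconv, ← (Equiv.subLeft x).tsum_eq]
  simp [mul_comm]

theorem pconv_assoc (f g h : V → ℝ≥0∞) : pconv (pconv f g) h = pconv f (pconv g h) := by
  ext x
  simp only [pconv, ← ENNReal.tsum_mul_right, ← ENNReal.tsum_mul_left]
  rw [ENNReal.tsum_comm]
  refine tsum_congr fun y => ?_
  rw [← (Equiv.addRight y).tsum_eq]
  refine tsum_congr fun z => ?_
  simp [mul_assoc, sub_sub, add_comm]

theorem convIter_pconv (D f g : V → ℝ≥0∞) (i : ℕ) :
    pconv (convIter D i f) g = convIter D i (pconv f g) := by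
  induction i with
  | zero => rfl
  | succ i ih => rw [convIter, convIter, pconv_assoc, ih]

theorem convIter_add (D f : V → ℝ≥0∞) (i j : ℕ) :
    convIter D i (convIter D j f) = convIter D (i + j) f := by
  induction i with
  | zero => rw [zero_add]; rfl
  | succ i ih => rw [Nat.succ_add, convIter, convIter, ih]

theorem pconv_convIter_convIter (D f g : V → ℝ≥0∞) (i j : ℕ) :
    pconv (convIter D i f) (convIter D j g) = convIter D (i + j) (pconv f g) := by
  rw [convIter_pconv, pconv_comm, convIter_pconv, convIter_add, pconv_comm]

theorem convIter_succ_DStep [DecidableEq V] (S : Finset V) (i : ℕ) (f : V → ℝ≥0∞) (x : V) :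
    convIter (DStep S) (i + 1) f x =
      ∑ s ∈ S, (S.card : ℝ≥0∞)⁻¹ * convIter (DStep S) i f (x - s) := by
  rw [convIter, pconv, tsum_eq_sum (s := S) fun y hy => by simp [DStep, hy]]
  exact Finset.sum_congr rfl fun s hs => by simp [DStep, hs]

end Convolution

section Percolation

variable {V Ωs : Type*} [AddCommGroup V] [DecidableEq V] [MeasurableSpace Ωs] {S : Finset V}
  {P : Measure Ωs} [IsProbabilityMeasure P] {occ : Sym2 V → Set Ωs} {p : ℝ≥0∞}

theorem measure_sawEvent_add (hmeas : ∀ e, MeasurableSet (occ e))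
    (hoccP : ∀ e, IsEdge S e → P (occ e) = p)
    (hind : iIndepSet (fun e : {e : Sym2 V // IsEdge S e} => occ (e : Sym2 V)) P)
    (i : ℕ) (x y v : V) :
    P (sawEvent S occ i (x + v) (y + v)) = P (sawEvent S occ i x y) := by
  rw [sawEvent, sawEvent, sawSteps_add]
  simp only [walkEdges_add]
  exact measure_iUnion_allOcc_map (o := fun e : {e : Sym2 V // IsEdge S e} => occ e)
    (fun e => hmeas e) hind (edgeTranslate S v)
    (fun e => by rw [hoccP _ (edgeTranslate S v e).2, hoccP _ e.2]) _

theorem measure_sawEvent_succ_le (hmeas : ∀ e, MeasurableSet (occ e))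
    (hoccP : ∀ e, IsEdge S e → P (occ e) = p)
    (hind : iIndepSet (fun e : {e : Sym2 V // IsEdge S e} => occ (e : Sym2 V)) P)
    (i : ℕ) (x y : V) :
    P (sawEvent S occ (i + 1) x y) ≤ ∑ s ∈ S, p * P (sawEvent S occ i (x + s) y) := by
  rw [← Finset.sum_coe_sort S fun s => p * P (sawEvent S occ i (x + s) y)]
  refine (measure_mono (sawEvent_succ_subset occ i x y)).trans
    ((measure_iUnion_fintype_le P _).trans (Finset.sum_le_sum fun s _ => ?_))
  refine (measure_disjoint_occurrence_le (o := fun e : {e : Sym2 V // IsEdge S e} => occ e)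
    (fun e => hmeas e) hind
    (fun _ : Unit => {stepEdge x s}) fun σ : sawSteps S i (x + s) y =>
      walkEdges (x + s) σ.1).trans_eq ?_
  rw [Set.iUnion_const, allOcc, Finset.set_biInter_singleton, hoccP _ (stepEdge x s).2, sawEvent]

theorem measure_sawEvent_le (hmeas : ∀ e, MeasurableSet (occ e))
    (hoccP : ∀ e, IsEdge S e → P (occ e) = p)
    (hind : iIndepSet (fun e : {e : Sym2 V // IsEdge S e} => occ (e : Sym2 V)) P)
    (i : ℕ) (x y : V) :
    P (sawEvent S occ i x y) ≤
      (p * S.card) ^ i * convIter (DStep S) i (fun z => P (Conn S occ 0 z)) (y - x) := by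
  induction i generalizing x with
  | zero =>
    rw [pow_zero, one_mul, convIter]
    have h := measure_sawEvent_add hmeas hoccP hind 0 0 (y - x) x
    rw [zero_add, sub_add_cancel] at h
    rw [h]
    exact measure_mono (sawEvent_subset_connGE occ 0 0 (y - x))
  | succ i ih =>
    refine (measure_sawEvent_succ_le hmeas hoccP hind i x y).trans ?_
    rw [convIter_succ_DStep, Finset.mul_sum]
    refine Finset.sum_le_sum fun s hs => ?_
    have hcard : (S.card : ℝ≥0∞) * (S.card : ℝ≥0∞)⁻¹ = 1 :=
      ENNReal.mul_inv_cancel (by simpa using Finset.ne_empty_of_mem hs) (by simp)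
    refine (mul_le_mul_right (ih (x + s)) p).trans_eq ?_
    rw [← sub_sub]
    calc p * ((p * S.card) ^ i *
          convIter (DStep S) i (fun z => P (Conn S occ 0 z)) (y - x - s))
        = p * ((S.card : ℝ≥0∞) * (S.card : ℝ≥0∞)⁻¹) * (p * S.card) ^ i *
          convIter (DStep S) i (fun z => P (Conn S occ 0 z)) (y - x - s) := by
          rw [hcard, mul_one, mul_assoc]
      _ = _ := by ring

theorem measure_cycleGE_le (hmeas : ∀ e, MeasurableSet (occ e))
    (hind : iIndepSet (fun e : {e : Sym2 V // IsEdge S e} => occ (e : Sym2 V)) P)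
    {ℓ : ℕ} (hℓ : 4 ≤ ℓ) {x : V} (hx : x ≠ 0) :
    P (CycleGE S occ ℓ x) ≤ ∑ j ∈ Finset.range (ℓ - 1),
      P (sawEvent S occ (j + 1) 0 x) * P (sawEvent S occ (ℓ - (j + 1)) x 0) := by
  refine (measure_mono (cycleGE_subset occ hℓ hx)).trans
    ((measure_biUnion_finset_le _ _).trans (Finset.sum_le_sum fun j _ => ?_))
  exact measure_disjoint_occurrence_le (o := fun e : {e : Sym2 V // IsEdge S e} => occ e)
    (fun e => hmeas e) hind
    (fun σ : sawSteps S (j + 1) 0 x => walkEdges 0 σ.1)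
    fun σ : sawSteps S (ℓ - (j + 1)) x 0 => walkEdges x σ.1

end Percolation

/-- Suppose `p ≤ p̄_c` with `Ω p̄_c ≤ 2` and `T_p^{(ℓ,2)} ≤ K_{ℓ,2} Ω^{-ℓ/2}`, where
`T_p^{(ℓ,2)}` bounds `(D^{*ℓ} * τ_p^{*2})(0)` (this uses `τ̂_p ≥ 0`).  Then for
`ℓ ≥ 4`, `∑_{x ≠ 0} Π^{(0,ℓ)}_p(x) ≤ (ℓ-1) 2^ℓ K_{ℓ,2} Ω^{-ℓ/2}`, where
`Π^{(0,ℓ)}_p(x)` is the probability of an occupied cycle of length `≥ ℓ` through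
`0` and `x`. -/
theorem sum_cycle_prob_le {V Ωs : Type*} [AddCommGroup V] [DecidableEq V]
    [MeasurableSpace Ωs]
    (S : Finset V) (h0S : (0 : V) ∉ S) (hSymm : ∀ v ∈ S, -v ∈ S)
    (P : Measure Ωs) [IsProbabilityMeasure P]
    (occ : Sym2 V → Set Ωs) (hmeas : ∀ e, MeasurableSet (occ e))
    (p pbar : ℝ≥0∞) (hp : p ≤ pbar) (hpbar : pbar * S.card ≤ 2)
    (hoccP : ∀ e, IsEdge S e → P (occ e) = p)
    (hind : iIndepSet (fun e : {e : Sym2 V // IsEdge S e} => occ (e : Sym2 V)) P)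
    (ℓ : ℕ) (hℓ : 4 ≤ ℓ) (Tl2 Kl2 : ℝ≥0∞)
    (hT : convIter (DStep S) ℓ
        (pconv (fun y => P (Conn S occ 0 y)) (fun y => P (Conn S occ 0 y))) 0 ≤ Tl2)
    (hK : Tl2 ≤ Kl2 * (S.card : ℝ≥0∞) ^ (-(ℓ : ℝ) / 2)) :
    ∑' x : {x : V // x ≠ 0}, P (CycleGE S occ ℓ (x : V)) ≤
      ((ℓ : ℝ≥0∞) - 1) * 2 ^ ℓ * Kl2 * (S.card : ℝ≥0∞) ^ (-(ℓ : ℝ) / 2) := by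
  set f : V → ℝ≥0∞ := fun y => P (Conn S occ 0 y)
  have hpS : p * S.card ≤ 2 := (mul_le_mul_left hp _).trans hpbar
  have hpoint : ∀ x : {x : V // x ≠ 0}, P (CycleGE S occ ℓ (x : V)) ≤
      ∑ j ∈ Finset.range (ℓ - 1), 2 ^ ℓ * (convIter (DStep S) (j + 1) f x *
        convIter (DStep S) (ℓ - (j + 1)) f (0 - x)) := by
    intro x
    refine (measure_cycleGE_le hmeas hind hℓ x.2).trans (Finset.sum_le_sum fun j hj => ?_)
    refine (mul_le_mul' (measure_sawEvent_le hmeas hoccP hind _ _ _)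
      (measure_sawEvent_le hmeas hoccP hind _ _ _)).trans ?_
    have hjℓ : j + 1 + (ℓ - (j + 1)) = ℓ := by
      have := Finset.mem_range.1 hj
      lia
    rw [mul_mul_mul_comm, ← pow_add, hjℓ, sub_zero]
    gcongr
  have hsum : ∀ j ∈ Finset.range (ℓ - 1), ∑' x : V, 2 ^ ℓ * (convIter (DStep S) (j + 1) f x *
        convIter (DStep S) (ℓ - (j + 1)) f (0 - x)) ≤
      2 ^ ℓ * (Kl2 * (S.card : ℝ≥0∞) ^ (-(ℓ : ℝ) / 2)) := by
    intro j hj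
    have hjℓ : j + 1 + (ℓ - (j + 1)) = ℓ := by
      have := Finset.mem_range.1 hj
      lia
    have h := congrFun (pconv_convIter_convIter (DStep S) f f (j + 1) (ℓ - (j + 1))) 0
    rw [hjℓ] at h
    rw [ENNReal.tsum_mul_left]
    exact mul_le_mul_right (h.trans_le (hT.trans hK)) _
  calc ∑' x : {x : V // x ≠ 0}, P (CycleGE S occ ℓ (x : V))
      ≤ ∑' x : {x : V // x ≠ 0}, ∑ j ∈ Finset.range (ℓ - 1),
          2 ^ ℓ * (convIter (DStep S) (j + 1) f x *
            convIter (DStep S) (ℓ - (j + 1)) f (0 - x)) := ENNReal.tsum_le_tsum hpoint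
    _ ≤ ∑' x : V, ∑ j ∈ Finset.range (ℓ - 1), 2 ^ ℓ * (convIter (DStep S) (j + 1) f x *
            convIter (DStep S) (ℓ - (j + 1)) f (0 - x)) :=
        ENNReal.tsum_comp_le_tsum_of_injective Subtype.val_injective _
    _ = ∑ j ∈ Finset.range (ℓ - 1), ∑' x : V, 2 ^ ℓ * (convIter (DStep S) (j + 1) f x *
            convIter (DStep S) (ℓ - (j + 1)) f (0 - x)) :=
        Summable.tsum_finsetSum fun _ _ => ENNReal.summable
    _ ≤ ∑ _j ∈ Finset.range (ℓ - 1), 2 ^ ℓ * (Kl2 * (S.card : ℝ≥0∞) ^ (-(ℓ : ℝ) / 2)) :=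
        Finset.sum_le_sum hsum
    _ = ((ℓ : ℝ≥0∞) - 1) * 2 ^ ℓ * Kl2 * (S.card : ℝ≥0∞) ^ (-(ℓ : ℝ) / 2) := by
        rw [Finset.sum_const, Finset.card_range, nsmul_eq_mul, ENNReal.natCast_sub, Nat.cast_one]
        ring
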